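/- There exist an absolute constant α ∈ (0,1) and an absolute constant K > 1 such that for every positive integer d there exists θ₀(d) > 0 with the following property. Let 0 < θ ≤ θ₀(d), let p be a polynomial of degree at most d on ℝ^n, let X ∈ ℝ^n, and let ℓ be a nonnegative integer. Suppose that for every m with 1 ≤ m ≤ 4d the quantities |p_θ^{(ℓ),m}(X)|_2² and |p_θ^{(ℓ),m+1}(X)|_2² are positive and |log( |p_θ^{(ℓ),m}(X)|_2² / |p_θ^{(ℓ),m+1}(X)|_2² )| < α^d. Then for all m, m' with 0 ≤ m, m' ≤ 4d+1, |p_θ^{(ℓ),m}(X)|_2² ≤ K · |p_θ^{(ℓ),m'}(X)|_2². -/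

import Mathlib

open MeasureTheory ProbabilityTheory

/-- The standard Gaussian measure on `ℝ^n`. -/
noncomputable def stdGaussian (n : ℕ) : Measure (Fin n → ℝ) :=
  Measure.pi fun _ => gaussianReal 0 1

/-- `N_Y^θ(X) = cos θ · X + sin θ · Y`. -/
noncomputable def noisy {n : ℕ} (θ : ℝ) (Y X : Fin n → ℝ) : Fin n → ℝ :=
  Real.cos θ • X + Real.sin θ • Y

/-- The noisy derivative `D_{Y,Z}^θ f (X)`. -/
noncomputable def noisyDeriv {n : ℕ} (θ : ℝ) (Y Z : Fin n → ℝ)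
    (f : (Fin n → ℝ) → ℝ) (X : Fin n → ℝ) : ℝ :=
  (f (noisy θ Y X) - f (noisy θ Z X)) / θ

/-- `|f_θ^{(ℓ)}(X)|₂²`, the mean square of the `ℓ`-fold noisy derivative over
independent standard Gaussian directions. -/
noncomputable def derivNormSq (n : ℕ) (θ : ℝ) : ℕ → ((Fin n → ℝ) → ℝ) → (Fin n → ℝ) → ℝ
  | 0, f, X => (f X) ^ 2
  | (ℓ+1), f, X =>
      ∫ YZ : (Fin n → ℝ) × (Fin n → ℝ),
        derivNormSq n θ ℓ (noisyDeriv θ YZ.1 YZ.2 f) X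
        ∂((stdGaussian n).prod (stdGaussian n))

/-- The averaging operator `A^θ f (X) = E_Y[f(N_Y^θ(X))]`. -/
noncomputable def avgOp (n : ℕ) (θ : ℝ) (f : (Fin n → ℝ) → ℝ) (X : Fin n → ℝ) : ℝ :=
  ∫ Y, f (noisy θ Y X) ∂(stdGaussian n)

/-- `q_{ℓ,m}(X) = |p_θ^{(ℓ),m}(X)|₂² = (A^θ)^m |p_θ^{(ℓ)}(X)|₂²`. -/
noncomputable def qlm (n : ℕ) (θ : ℝ) (p : MvPolynomial (Fin n) ℝ) (ℓ m : ℕ)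
    (X : Fin n → ℝ) : ℝ :=
  (avgOp n θ)^[m] (derivNormSq n θ ℓ (fun W => MvPolynomial.eval W p)) X

/-- The Gaussian `L^k` norm of a function on `ℝ^n`. -/
noncomputable def gaussNorm (n : ℕ) (k : ℝ) (p : (Fin n → ℝ) → ℝ) : ℝ :=
  (∫ X, |p X| ^ k ∂(stdGaussian n)) ^ (1 / k)

/-- `f` is a degree-`d` polynomial threshold function on `ℝ^n`. -/
def isPTF (n d : ℕ) (f : (Fin n → ℝ) → ℝ) : Prop :=
  ∃ p : MvPolynomial (Fin n) ℝ, p.totalDegree ≤ d ∧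
    ∀ x, f x = Real.sign (MvPolynomial.eval x p)

/-- `X` is a `k`-independent family of standard Gaussians: any `m ≤ k` distinct
coordinates are jointly distributed as `m` independent standard Gaussians. -/
def kIndepGaussian {Ω : Type} [MeasurableSpace Ω] (n k : ℕ) (P : Measure Ω)
    (X : Ω → (Fin n → ℝ)) : Prop :=
  ∀ m : ℕ, m ≤ k → ∀ ι : Fin m → Fin n, Function.Injective ι →
    Measure.map (fun ω i => X ω (ι i)) P = Measure.pi fun _ : Fin m => gaussianReal 0 1

/-- Monomial functions. -/
noncomputable def monoFn {n : ℕ} (s : Fin n → ℕ) (x : Fin n → ℝ) : ℝ := ∏ i, x i ^ s i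

/-- Polynomial functions of degree `< k`. -/
noncomputable def polyLt (n k : ℕ) : Submodule ℝ ((Fin n → ℝ) → ℝ) :=
  Submodule.span ℝ {f | ∃ s : Fin n → ℕ, ∑ i, s i < k ∧ f = monoFn s}

lemma monoFn_mem {n k : ℕ} (s : Fin n → ℕ) (h : ∑ i, s i < k) : monoFn s ∈ polyLt n k :=
  Submodule.subset_span ⟨s, h, rfl⟩

lemma polyLt_mono {n k l : ℕ} (h : k ≤ l) : polyLt n k ≤ polyLt n l := by
  apply Submodule.span_mono
  rintro f ⟨s, hs, rfl⟩
  exact ⟨s, by omega, rfl⟩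

lemma const_mem (n k : ℕ) (v : ℝ) : (fun _ => v) ∈ polyLt n (k+1) := by
  have h := (polyLt n (k+1)).smul_mem v (monoFn_mem (fun _ => 0) (by simp))
  convert h using 1
  funext x
  simp [monoFn]

lemma polyLt_zero {n : ℕ} {f : (Fin n → ℝ) → ℝ} (hf : f ∈ polyLt n 0) : f = 0 := by
  simpa [polyLt] using hf

instance stdGaussian_prob (n : ℕ) : IsProbabilityMeasure (stdGaussian n) := by
  unfold _root_.stdGaussian; infer_instance

lemma integrable_pow_gauss (m : ℕ) : Integrable (fun y : ℝ => y ^ m) (gaussianReal 0 1) := by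
  have h := (memLp_id_gaussianReal (μ := 0) (v := 1) (m : NNReal))
  have h2 : Integrable (fun y : ℝ => ‖y‖ ^ m) (gaussianReal 0 1) := by
    have := MemLp.integrable_norm_pow' (p := m) (f := (id : ℝ → ℝ)) (by simpa using h)
    simpa using this
  refine h2.mono' (by fun_prop) (Filter.Eventually.of_forall fun y => ?_)
  simp

lemma integrable_affine_pow (a b : ℝ) (m : ℕ) :
    Integrable (fun y : ℝ => (a + b * y) ^ m) (gaussianReal 0 1) := by
  simp_rw [add_pow, mul_pow]
  refine integrable_finsetSum _ fun j _ => ?_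
  exact (((integrable_pow_gauss (m - j)).const_mul (b ^ (m-j))).const_mul (a ^ j)).mul_const _

lemma integrable_monoFn_noisy {n : ℕ} (θ : ℝ) (s : Fin n → ℕ) (X : Fin n → ℝ) :
    Integrable (fun Y => monoFn s (noisy θ Y X)) (stdGaussian n) := by
  unfold monoFn noisy _root_.stdGaussian
  simp only [Pi.add_apply, Pi.smul_apply, smul_eq_mul]
  exact Integrable.fintype_prod
    (f := fun i y => (Real.cos θ * X i + Real.sin θ * y) ^ s i)
    (fun i => integrable_affine_pow _ _ _)

lemma integrable_polyLt_noisy {n k : ℕ} (θ : ℝ) {f : (Fin n → ℝ) → ℝ} (hf : f ∈ polyLt n k)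
    (X : Fin n → ℝ) : Integrable (fun Y => f (noisy θ Y X)) (stdGaussian n) := by
  unfold polyLt at hf
  induction hf using Submodule.span_induction with
  | mem f h => obtain ⟨s, _, rfl⟩ := h; exact integrable_monoFn_noisy θ s X
  | zero => simp
  | add f g _ _ hf hg => exact hf.add hg
  | smul a f _ hf => exact hf.const_mul a

lemma avgOp_add {n k : ℕ} (θ : ℝ) {f g : (Fin n → ℝ) → ℝ} (hf : f ∈ polyLt n k)
    (hg : g ∈ polyLt n k) : avgOp n θ (f + g) = avgOp n θ f + avgOp n θ g := by
  funext X
  exact integral_add (integrable_polyLt_noisy θ hf X) (integrable_polyLt_noisy θ hg X)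

lemma avgOp_sub {n k : ℕ} (θ : ℝ) {f g : (Fin n → ℝ) → ℝ} (hf : f ∈ polyLt n k)
    (hg : g ∈ polyLt n k) : avgOp n θ (f - g) = avgOp n θ f - avgOp n θ g := by
  funext X
  exact integral_sub (integrable_polyLt_noisy θ hf X) (integrable_polyLt_noisy θ hg X)

lemma avgOp_smul {n : ℕ} (θ a : ℝ) (f : (Fin n → ℝ) → ℝ) :
    avgOp n θ (a • f) = a • avgOp n θ f := by
  funext X
  simp [avgOp, integral_const_mul]

lemma avgOp_const {n : ℕ} (θ v : ℝ) : avgOp n θ (fun _ => v) = fun _ => v := by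
  funext X
  simp [avgOp]

lemma integral_affine_pow (a b x : ℝ) (m : ℕ) :
    ∫ y : ℝ, (a * x + b * y) ^ m ∂(gaussianReal 0 1) =
      ∑ j ∈ Finset.range (m+1),
        (a ^ j * b ^ (m-j) * (∫ y : ℝ, y ^ (m-j) ∂(gaussianReal 0 1)) * (m.choose j)) * x ^ j := by
  simp_rw [add_pow, mul_pow]
  rw [integral_finsetSum]
  · refine Finset.sum_congr rfl fun j _ => ?_
    rw [integral_mul_const, integral_const_mul, integral_const_mul]
    ring
  · intro j _
    exact (((integrable_pow_gauss (m - j)).const_mul (b ^ (m-j))).const_mul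
      (a ^ j * x ^ j)).mul_const _

lemma avgOp_monoFn {n : ℕ} (θ : ℝ) (s : Fin n → ℕ) :
    avgOp n θ (monoFn s) - (Real.cos θ) ^ (∑ i, s i) • monoFn s ∈ polyLt n (∑ i, s i) := by
  set κ : ℕ → ℕ → ℝ := fun m j => Real.cos θ ^ j * Real.sin θ ^ (m-j) *
    (∫ y : ℝ, y ^ (m-j) ∂(gaussianReal 0 1)) * (m.choose j) with hκ
  set P := Fintype.piFinset (fun i => Finset.range (s i + 1)) with hP
  have h1 : avgOp n θ (monoFn s) = ∑ t ∈ P, (∏ i, κ (s i) (t i)) • monoFn t := by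
    funext X
    have : avgOp n θ (monoFn s) X = ∏ i, ∑ j ∈ Finset.range (s i + 1), κ (s i) j * X i ^ j := by
      unfold avgOp monoFn noisy _root_.stdGaussian
      simp only [Pi.add_apply, Pi.smul_apply, smul_eq_mul]
      rw [integral_fintype_prod_eq_prod
        (f := fun i y => (Real.cos θ * X i + Real.sin θ * y) ^ s i)]
      exact Finset.prod_congr rfl fun i _ => integral_affine_pow _ _ _ _
    rw [this, Finset.prod_univ_sum, Finset.sum_apply]
    refine Finset.sum_congr rfl fun t _ => ?_
    simp [monoFn, Finset.prod_mul_distrib]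
  have hs : s ∈ P := by simp [hP]
  have hk : ∏ i, κ (s i) (s i) = Real.cos θ ^ (∑ i, s i) := by
    rw [← Finset.prod_pow_eq_pow_sum]
    exact Finset.prod_congr rfl fun i _ => by simp [hκ]
  rw [h1, ← Finset.add_sum_erase _ _ hs, hk, add_sub_cancel_left]
  refine Submodule.sum_mem _ fun t ht => Submodule.smul_mem _ _ (monoFn_mem t ?_)
  rw [Finset.mem_erase, hP, Fintype.mem_piFinset] at ht
  obtain ⟨hne, hle⟩ := ht
  have hle' : ∀ i, t i ≤ s i := fun i => by have := hle i; simp at this; omega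
  obtain ⟨i, hi⟩ : ∃ i, t i ≠ s i := by
    by_contra hcon
    push Not at hcon
    exact hne (funext hcon)
  exact Finset.sum_lt_sum (fun i _ => hle' i) ⟨i, Finset.mem_univ _, lt_of_le_of_ne (hle' i) hi⟩

lemma avgOp_lower {n k : ℕ} (θ : ℝ) {f : (Fin n → ℝ) → ℝ} (hf : f ∈ polyLt n (k+1)) :
    avgOp n θ f - (Real.cos θ) ^ k • f ∈ polyLt n k := by
  have hf' := hf
  rw [polyLt] at hf
  induction hf using Submodule.span_induction with
  | mem f h =>
    obtain ⟨s, hs, rfl⟩ := h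
    have h0 := avgOp_monoFn θ s
    rcases Nat.lt_succ_iff_lt_or_eq.mp hs with h | h
    · have h1 := polyLt_mono h.le h0
      have h2 := monoFn_mem s h
      have := (polyLt n k).add_mem h1 ((polyLt n k).smul_mem
        ((Real.cos θ) ^ (∑ i, s i) - (Real.cos θ) ^ k) h2)
      convert this using 1
      module
    · rw [h] at h0; exact h0
  | zero =>
    have : avgOp n θ 0 = 0 := by funext X; simp [avgOp]
    rw [this]; simp
  | add f g hf0 hg0 hf hg =>
    have h1 := hf hf0
    have h2 := hg hg0
    rw [avgOp_add θ hf0 hg0]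
    have := (polyLt n k).add_mem h1 h2
    convert this using 1
    module
  | smul a f hf0 hf =>
    rw [avgOp_smul]
    have := (polyLt n k).smul_mem a (hf hf0)
    convert this using 1
    module

lemma avgOp_mem {n k : ℕ} (θ : ℝ) {f : (Fin n → ℝ) → ℝ} (hf : f ∈ polyLt n k) :
    avgOp n θ f ∈ polyLt n k := by
  cases k with
  | zero =>
    rw [polyLt_zero hf]
    have : avgOp n θ 0 = 0 := by funext X; simp [avgOp]
    rw [this]; simp
  | succ k =>
    have h := (polyLt n (k+1)).add_mem (polyLt_mono (Nat.le_succ k) (avgOp_lower θ hf))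
      ((polyLt n (k+1)).smul_mem (Real.cos θ ^ k) hf)
    simpa using h

lemma iter_mem {n k : ℕ} (θ : ℝ) {f : (Fin n → ℝ) → ℝ} (hf : f ∈ polyLt n k) (j : ℕ) :
    (avgOp n θ)^[j] f ∈ polyLt n k := by
  induction j with
  | zero => simpa
  | succ j ih => rw [Function.iterate_succ_apply']; exact avgOp_mem θ ih

lemma iter_sub {n k : ℕ} (θ : ℝ) {f g : (Fin n → ℝ) → ℝ} (hf : f ∈ polyLt n k)
    (hg : g ∈ polyLt n k) (j : ℕ) :
    (avgOp n θ)^[j] (f - g) = (avgOp n θ)^[j] f - (avgOp n θ)^[j] g := by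
  induction j with
  | zero => simp
  | succ j ih =>
    simp only [Function.iterate_succ_apply', ih]
    exact avgOp_sub θ (iter_mem θ hf j) (iter_mem θ hg j)

lemma iter_smul {n : ℕ} (θ a : ℝ) (f : (Fin n → ℝ) → ℝ) (j : ℕ) :
    (avgOp n θ)^[j] (a • f) = a • (avgOp n θ)^[j] f := by
  induction j with
  | zero => simp
  | succ j ih => simp only [Function.iterate_succ_apply', ih, avgOp_smul]

lemma iter_const {n : ℕ} (θ v : ℝ) (j : ℕ) :
    (avgOp n θ)^[j] (fun _ => v) = fun _ => v := by
  induction j with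
  | zero => simp
  | succ j ih => simp only [Function.iterate_succ_apply', ih, avgOp_const]

/-- Extrapolation to `j = 0`. -/
lemma extrapolate {n : ℕ} (θ : ℝ) (hc0 : 0 ≤ Real.cos θ) (X : Fin n → ℝ) (k : ℕ) :
    (∀ i < k, 1/2 ≤ Real.cos θ ^ i) → ∀ f ∈ polyLt n k, ∀ E : ℝ, 0 ≤ E →
    (∀ j, 1 ≤ j → j ≤ k → |(avgOp n θ)^[j] f X| ≤ E) → |f X| ≤ (4 ^ k - 1) * E := by
  induction k with
  | zero =>
    intro _ f hf E hE _
    rw [polyLt_zero hf]; simp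
  | succ k ih =>
    intro hc f hf E hE hj
    have hck := hc k (Nat.lt_succ_self k)
    have hck1 : Real.cos θ ^ k ≤ 1 := pow_le_one₀ hc0 (Real.cos_le_one θ)
    have hg := avgOp_lower θ hf
    have key := ih (fun i hi => hc i (by omega)) _ hg (2 * E) (by linarith) ?_
    · have h1 := hj 1 le_rfl (by omega)
      simp only [Function.iterate_one] at h1
      simp only [Pi.sub_apply, Pi.smul_apply, smul_eq_mul] at key
      have h2 : |Real.cos θ ^ k * f X| ≤ E + (4 ^ k - 1) * (2 * E) := by
        have : Real.cos θ ^ k * f X =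
          avgOp n θ f X - (avgOp n θ f X - Real.cos θ ^ k * f X) := by ring
        rw [this]
        exact (abs_sub _ _).trans (add_le_add h1 key)
      rw [abs_mul, abs_of_nonneg (by linarith : 0 ≤ Real.cos θ ^ k)] at h2
      have h3 : 1/2 * |f X| ≤ Real.cos θ ^ k * |f X| :=
        mul_le_mul_of_nonneg_right hck (abs_nonneg _)
      rw [pow_succ]
      nlinarith
    · intro j hj1 hjk
      rw [iter_sub θ (avgOp_mem θ hf) ((polyLt n (k+1)).smul_mem _ hf), iter_smul,
        ← Function.iterate_succ_apply]
      simp only [Pi.sub_apply, Pi.smul_apply, smul_eq_mul]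
      have h1 := hj (j+1) (by omega) (by omega)
      have h2 := hj j (by omega) (by omega)
      refine (abs_sub _ _).trans ?_
      rw [abs_mul, abs_of_nonneg (by linarith : 0 ≤ Real.cos θ ^ k)]
      have : Real.cos θ ^ k * |(avgOp n θ)^[j] f X| ≤ 1 * E :=
        mul_le_mul hck1 h2 (abs_nonneg _) (by norm_num)
      linarith

/-- Exponents of total degree at most `d`. -/
def expSet (n d : ℕ) : Finset (Fin n → ℕ) :=
  (Fintype.piFinset fun _ => Finset.range (d+1)).filter fun s => ∑ i, s i ≤ d

lemma mem_expSet {n d : ℕ} {s : Fin n → ℕ} : s ∈ expSet n d ↔ ∑ i, s i ≤ d := by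
  unfold expSet
  rw [Finset.mem_filter, Fintype.mem_piFinset]
  refine ⟨fun h => h.2, fun h => ⟨fun i => ?_, h⟩⟩
  have : s i ≤ ∑ i, s i := Finset.single_le_sum (fun _ _ => Nat.zero_le _) (Finset.mem_univ i)
  rw [Finset.mem_range]; omega

/-- Coefficients in the expansion of a shifted monomial. -/
noncomputable def shiftCoef {n : ℕ} (θ : ℝ) (s t : Fin n → ℕ) (Y : Fin n → ℝ) : ℝ :=
  ∏ i, (Real.cos θ ^ t i * (Real.sin θ * Y i) ^ (s i - t i) * ((s i).choose (t i)))

lemma monoFn_noisy {n d : ℕ} (θ : ℝ) {s : Fin n → ℕ} (hs : s ∈ expSet n d) (Y X : Fin n → ℝ) :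
    monoFn s (noisy θ Y X) = ∑ t ∈ expSet n d, shiftCoef θ s t Y * monoFn t X := by
  have h1 : monoFn s (noisy θ Y X) = ∑ t ∈ Fintype.piFinset (fun i => Finset.range (s i + 1)),
      shiftCoef θ s t Y * monoFn t X := by
    unfold monoFn noisy shiftCoef
    simp only [Pi.add_apply, Pi.smul_apply, smul_eq_mul, add_pow]
    rw [Finset.prod_univ_sum]
    refine Finset.sum_congr rfl fun t _ => ?_
    rw [← Finset.prod_mul_distrib]
    refine Finset.prod_congr rfl fun i _ => ?_
    ring
  rw [h1]
  apply Finset.sum_subset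
  · intro t ht
    rw [Fintype.mem_piFinset] at ht
    rw [mem_expSet] at hs ⊢
    refine le_trans (Finset.sum_le_sum fun i _ => ?_) hs
    have := ht i
    simp at this; omega
  · intro t _ ht
    rw [Fintype.mem_piFinset] at ht
    push Not at ht
    obtain ⟨i, hi⟩ := ht
    have h0 : shiftCoef θ s t Y = 0 := by
      apply Finset.prod_eq_zero (Finset.mem_univ i)
      rw [Nat.choose_eq_zero_of_lt (by simp at hi; omega)]
      simp
    rw [h0, zero_mul]

lemma shiftCoef_memLp {n : ℕ} (θ : ℝ) (s t : Fin n → ℕ) :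
    MemLp (shiftCoef θ s t) 2 (stdGaussian n) := by
  have hm : Continuous (shiftCoef θ s t) := by unfold shiftCoef; fun_prop
  rw [memLp_two_iff_integrable_sq hm.aestronglyMeasurable]
  unfold shiftCoef _root_.stdGaussian
  simp_rw [← Finset.prod_pow]
  refine Integrable.fintype_prod
    (f := fun i y => (Real.cos θ ^ t i * (Real.sin θ * y) ^ (s i - t i) * ((s i).choose (t i)))^2)
    (fun i => ?_)
  have := (((integrable_pow_gauss ((s i - t i)*2)).const_mul
    ((Real.cos θ ^ t i * Real.sin θ ^ (s i - t i) * ((s i).choose (t i)))^2)))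
  refine this.congr (Filter.Eventually.of_forall fun y => ?_)
  simp only [mul_pow, pow_mul]
  ring

/-- Coefficients of the noisy derivative. -/
noncomputable def derCoef {n : ℕ} (θ : ℝ) (s t : Fin n → ℕ) (YZ : (Fin n → ℝ) × (Fin n → ℝ)) : ℝ :=
  (shiftCoef θ s t YZ.1 - shiftCoef θ s t YZ.2) * θ⁻¹

lemma derCoef_memLp {n : ℕ} (θ : ℝ) (s t : Fin n → ℕ) :
    MemLp (derCoef θ s t) 2 ((stdGaussian n).prod (stdGaussian n)) := by
  exact (((shiftCoef_memLp θ s t).comp_fst (stdGaussian n)).sub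
    ((shiftCoef_memLp θ s t).comp_snd (stdGaussian n))).mul_const _

lemma noisyDeriv_sum {n d : ℕ} (θ : ℝ) (Y Z : Fin n → ℝ) (a : (Fin n → ℕ) → ℝ) :
    noisyDeriv θ Y Z (fun x => ∑ s ∈ expSet n d, a s * monoFn s x) =
      fun x => ∑ t ∈ expSet n d, (∑ s ∈ expSet n d, a s * derCoef θ s t (Y, Z)) * monoFn t x := by
  funext x
  unfold noisyDeriv
  simp_rw [Finset.sum_mul]
  rw [Finset.sum_comm, ← Finset.sum_sub_distrib, div_eq_mul_inv, Finset.sum_mul]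
  refine Finset.sum_congr rfl fun s hs => ?_
  rw [monoFn_noisy θ hs, monoFn_noisy θ hs, ← mul_sub, ← Finset.sum_sub_distrib, Finset.mul_sum,
    Finset.sum_mul]
  refine Finset.sum_congr rfl fun t _ => ?_
  unfold derCoef
  ring

lemma quad_swap {ι : Type*} (S : Finset ι) (F : ι → ι → ι → ι → ℝ) :
    ∑ t ∈ S, ∑ t' ∈ S, ∑ s ∈ S, ∑ s' ∈ S, F t t' s s' =
      ∑ s ∈ S, ∑ s' ∈ S, ∑ t ∈ S, ∑ t' ∈ S, F t t' s s' := by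
  calc ∑ t ∈ S, ∑ t' ∈ S, ∑ s ∈ S, ∑ s' ∈ S, F t t' s s'
      = ∑ x ∈ S ×ˢ S, ∑ y ∈ S ×ˢ S, F x.1 x.2 y.1 y.2 := by simp only [Finset.sum_product]
    _ = ∑ y ∈ S ×ˢ S, ∑ x ∈ S ×ˢ S, F x.1 x.2 y.1 y.2 := Finset.sum_comm
    _ = _ := by simp only [Finset.sum_product]

lemma derivNormSq_quad (n d : ℕ) (θ : ℝ) (ℓ : ℕ) :
    ∃ B : (Fin n → ℕ) → (Fin n → ℕ) → ((Fin n → ℝ) → ℝ),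
      (∀ s ∈ expSet n d, ∀ t ∈ expSet n d, B s t ∈ polyLt n (2*d+1)) ∧
      ∀ a : (Fin n → ℕ) → ℝ,
        derivNormSq n θ ℓ (fun x => ∑ s ∈ expSet n d, a s * monoFn s x) =
          ∑ s ∈ expSet n d, ∑ t ∈ expSet n d, (a s * a t) • B s t := by
  induction ℓ with
  | zero =>
    refine ⟨fun s t => monoFn (s + t), fun s hs t ht => ?_, fun a => ?_⟩
    · apply monoFn_mem
      rw [mem_expSet] at hs ht
      simp only [Pi.add_apply, Finset.sum_add_distrib]
      omega
    · funext X
      simp only [derivNormSq, Finset.sum_apply, Pi.smul_apply, smul_eq_mul]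
      rw [sq, Finset.sum_mul_sum]
      refine Finset.sum_congr rfl fun s _ => Finset.sum_congr rfl fun t _ => ?_
      simp only [monoFn, Pi.add_apply, pow_add, Finset.prod_mul_distrib]
      ring
  | succ ℓ ih =>
    obtain ⟨B, hB, hq⟩ := ih
    set M := (stdGaussian n).prod (stdGaussian n) with hM
    refine ⟨fun s s' => ∑ t ∈ expSet n d, ∑ t' ∈ expSet n d,
      (∫ YZ, derCoef θ s t YZ * derCoef θ s' t' YZ ∂M) • B t t', fun s _ s' _ => ?_, fun a => ?_⟩
    · exact Submodule.sum_mem _ fun t ht => Submodule.sum_mem _ fun t' ht' =>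
        Submodule.smul_mem _ _ (hB t ht t' ht')
    · funext X
      have hint : ∀ s s' t t', Integrable (fun YZ => derCoef θ s t YZ * derCoef θ s' t' YZ) M :=
        fun s s' t t' => (derCoef_memLp θ s t).integrable_mul (derCoef_memLp θ s' t')
      have e1 : ∀ YZ : (Fin n → ℝ) × (Fin n → ℝ), derivNormSq n θ ℓ (noisyDeriv θ YZ.1 YZ.2
          (fun x => ∑ s ∈ expSet n d, a s * monoFn s x)) X =
          ∑ s ∈ expSet n d, ∑ s' ∈ expSet n d, ∑ t ∈ expSet n d, ∑ t' ∈ expSet n d,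
            (a s * a s' * B t t' X) * (derCoef θ s t YZ * derCoef θ s' t' YZ) := by
        intro YZ
        rw [noisyDeriv_sum, hq]
        simp only [Finset.sum_apply, Pi.smul_apply, smul_eq_mul, Prod.mk.eta]
        simp_rw [Finset.sum_mul_sum, Finset.sum_mul]
        rw [quad_swap]
        refine Finset.sum_congr rfl fun s _ => Finset.sum_congr rfl fun s' _ =>
          Finset.sum_congr rfl fun t _ => Finset.sum_congr rfl fun t' _ => ?_
        ring
      simp only [derivNormSq]
      simp_rw [e1]
      rw [integral_finsetSum _ fun s _ => integrable_finsetSum _ fun s' _ =>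
        integrable_finsetSum _ fun t _ => integrable_finsetSum _ fun t' _ =>
          (hint s s' t t').const_mul _]
      simp only [Finset.sum_apply, Pi.smul_apply, smul_eq_mul]
      refine Finset.sum_congr rfl fun s _ => ?_
      rw [integral_finsetSum _ fun s' _ =>
        integrable_finsetSum _ fun t _ => integrable_finsetSum _ fun t' _ =>
          (hint s s' t t').const_mul _]
      refine Finset.sum_congr rfl fun s' _ => ?_
      rw [integral_finsetSum _ fun t _ => integrable_finsetSum _ fun t' _ =>
          (hint s s' t t').const_mul _, Finset.mul_sum]
      refine Finset.sum_congr rfl fun t _ => ?_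
      rw [integral_finsetSum _ fun t' _ => (hint s s' t t').const_mul _, Finset.mul_sum]
      refine Finset.sum_congr rfl fun t' _ => ?_
      rw [integral_const_mul]
      ring

lemma eval_eq_sum {n d : ℕ} (p : MvPolynomial (Fin n) ℝ) (hp : p.totalDegree ≤ d) :
    (fun W => MvPolynomial.eval W p) = fun x => ∑ s ∈ expSet n d,
      p.coeff (Finsupp.equivFunOnFinite.symm s) * monoFn s x := by
  funext x
  rw [MvPolynomial.eval_eq']
  refine Finset.sum_of_injOn (fun u => (u : Fin n → ℕ)) ?_ ?_ ?_ ?_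
  · intro u _ v _ h
    exact DFunLike.coe_injective h
  · intro u hu
    have := MvPolynomial.le_totalDegree hu
    rw [Finset.mem_coe, mem_expSet]
    rw [Finsupp.sum_fintype _ _ (by simp)] at this
    exact this.trans hp
  · intro s _ hs
    have : p.coeff (Finsupp.equivFunOnFinite.symm s) = 0 := by
      by_contra hne
      exact hs ⟨_, by simpa using hne, by simp⟩
    rw [this, zero_mul]
  · intro u _
    simp [monoFn]

lemma derivNormSq_mem {n d : ℕ} (θ : ℝ) (p : MvPolynomial (Fin n) ℝ) (hp : p.totalDegree ≤ d)
    (ℓ : ℕ) : derivNormSq n θ ℓ (fun W => MvPolynomial.eval W p) ∈ polyLt n (2*d+1) := by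
  obtain ⟨B, hB, hq⟩ := derivNormSq_quad n d θ ℓ
  rw [eval_eq_sum p hp, hq]
  exact Submodule.sum_mem _ fun t ht => Submodule.sum_mem _ fun t' ht' =>
        Submodule.smul_mem _ _ (hB t ht t' ht')

lemma alpha_bound (d : ℕ) (hd : 0 < d) :
    4 * (d:ℝ) * (1/2048)^d ≤ 1 / (16 * 16 ^ d) := by
  have h : (d:ℝ) ≤ 2 ^ d := by exact_mod_cast Nat.lt_two_pow_self.le
  rw [le_div_iff₀ (by positivity)]
  have e : (4:ℝ) * d * (1/2048)^d * (16 * 16^d) = 64 * (d * (1/128)^d) := by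
    rw [show (1/128:ℝ) = 1/2048 * 16 by norm_num, mul_pow]; ring
  rw [e]
  have h2 : (d:ℝ) * (1/128)^d ≤ (1/64)^d := by
    calc (d:ℝ) * (1/128)^d ≤ 2^d * (1/128)^d := by gcongr
      _ = (1/64)^d := by rw [← mul_pow]; norm_num
  have h3 : (1/64:ℝ)^d ≤ 1/64 := pow_le_of_le_one (by norm_num) (by norm_num) hd.ne'
  linarith

/-- If the consecutive ratios `q_{ℓ,m}/q_{ℓ,m+1}` for `1 ≤ m ≤ 4d` are within
multiplicative error `e^{±α^d}` of one, then all `q_{ℓ,m}`, `0 ≤ m ≤ 4d+1`, are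
within constant multiples of each other. -/
theorem stmt15 :
    ∃ α ∈ Set.Ioo (0:ℝ) 1, ∃ K > (1:ℝ),
      ∀ d : ℕ, 0 < d → ∃ θ₀ > (0:ℝ),
        ∀ θ : ℝ, 0 < θ → θ ≤ θ₀ →
          ∀ (n : ℕ) (p : MvPolynomial (Fin n) ℝ), p.totalDegree ≤ d →
            ∀ (X : Fin n → ℝ) (ℓ : ℕ),
              (∀ m : ℕ, 1 ≤ m → m ≤ 4*d →
                0 < qlm n θ p ℓ m X ∧ 0 < qlm n θ p ℓ (m+1) X ∧
                |Real.log (qlm n θ p ℓ m X / qlm n θ p ℓ (m+1) X)| < α ^ d) →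
              ∀ m m' : ℕ, m ≤ 4*d+1 → m' ≤ 4*d+1 →
                qlm n θ p ℓ m X ≤ K * qlm n θ p ℓ m' X := by
  refine ⟨1/2048, ⟨by norm_num, by norm_num⟩, 3, by norm_num, fun d hd => ?_⟩
  have hcont : ContinuousAt (fun θ : ℝ => Real.cos θ ^ (2*d)) 0 := by fun_prop
  have hcont2 : ContinuousAt (fun θ : ℝ => Real.cos θ) 0 := by fun_prop
  have hev := (hcont.eventually (lt_mem_nhds (a := (1/2:ℝ)) (by norm_num))).and
    (hcont2.eventually (lt_mem_nhds (a := (0:ℝ)) (by norm_num)))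
  obtain ⟨r, hr, hball⟩ := Metric.eventually_nhds_iff.mp hev
  refine ⟨r/2, by linarith, fun θ hθ hθr n p hp X ℓ hyp => ?_⟩
  obtain ⟨hc, hc0⟩ := hball (y := θ) (by rw [Real.dist_eq, sub_zero, abs_of_pos hθ]; linarith)
  set f := derivNormSq n θ ℓ (fun W => MvPolynomial.eval W p) with hf
  have hfm : f ∈ polyLt n (2*d+1) := derivNormSq_mem θ p hp ℓ
  set q : ℕ → ℝ := fun m => qlm n θ p ℓ m X with hq
  set η : ℝ := (1/2048)^d with hη
  have hηpos : 0 < η := by positivity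
  have hq1 : 0 < q 1 := (hyp 1 le_rfl (by omega)).1
  have hpos : ∀ m, 1 ≤ m → m ≤ 4*d+1 → 0 < q m := by
    intro m h1 h2
    rcases Nat.lt_or_ge m (4*d+1) with h | h
    · exact (hyp m h1 (by omega)).1
    · have : m = 4*d + 1 := by omega
      subst this
      exact (hyp (4*d) (by omega) le_rfl).2.1
  have hlog : ∀ m, m ≤ 4*d → |Real.log (q (m+1)) - Real.log (q 1)| ≤ m * η := by
    intro m
    induction m with
    | zero => intro _; simp
    | succ m ih =>
      intro hm
      have h1 := ih (by omega)
      have h2 := (hyp (m+1) (by omega) hm).2.2.le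
      change |Real.log (q (m+1) / q (m+1+1))| ≤ η at h2
      rw [Real.log_div (hpos _ (by omega) (by omega)).ne' (hpos _ (by omega) (by omega)).ne'] at h2
      rw [abs_le] at *
      push_cast
      constructor <;> linarith [h1.1, h1.2, h2.1, h2.2]
  have hb := alpha_bound d hd
  rw [← hη] at hb
  have h16 : (1:ℝ) ≤ 16^d := one_le_pow₀ (by norm_num)
  have hb1 : 1 / (16 * (16:ℝ) ^ d) ≤ 1/16 := by
    apply one_div_le_one_div_of_le <;> linarith
  set ε : ℝ := 1 / (8 * 16^d) with hε
  have hε0 : 0 < ε := by positivity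
  have hε1 : ε ≤ 1/8 := by apply one_div_le_one_div_of_le <;> linarith
  have hε2 : 2 * (1 / (16 * (16:ℝ) ^ d)) = ε := by rw [hε]; field_simp; norm_num
  have hclose : ∀ m, 1 ≤ m → m ≤ 4*d+1 → |q m - q 1| ≤ ε * q 1 := by
    intro m h1 h2
    obtain ⟨m, rfl⟩ : ∃ k, m = k + 1 := ⟨m-1, by omega⟩
    have hl := hlog m (by omega)
    have hm : (m:ℝ) ≤ 4 * d := by exact_mod_cast (by omega : m ≤ 4*d)
    have hl2 : |Real.log (q (m+1)) - Real.log (q 1)| ≤ 1 / (16 * (16:ℝ) ^ d) :=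
      hl.trans ((mul_le_mul_of_nonneg_right hm hηpos.le).trans hb)
    have he := Real.abs_exp_sub_one_le (hl2.trans (by linarith))
    rw [Real.exp_sub, Real.exp_log (hpos _ h1 h2), Real.exp_log hq1] at he
    have e : q (m+1) - q 1 = (q (m+1) / q 1 - 1) * q 1 := by field_simp
    rw [e, abs_mul, abs_of_pos hq1]
    apply mul_le_mul_of_nonneg_right _ hq1.le
    linarith
  have hex := extrapolate θ hc0.le X (2*d+1) (fun i hi => ?_) (f - fun _ => q 1)
    ((polyLt n (2*d+1)).sub_mem hfm (const_mem n (2*d) (q 1))) (ε * q 1) (by positivity)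
    (fun j hj1 hj2 => ?_)
  rotate_left
  · exact hc.le.trans (pow_le_pow_of_le_one hc0.le (Real.cos_le_one θ) (by omega))
  · rw [iter_sub θ hfm (const_mem n (2*d) (q 1)), iter_const]
    exact hclose j hj1 (by omega)
  have h0 : |q 0 - q 1| ≤ 1/2 * q 1 := by
    change |q 0 - q 1| ≤ _ at hex
    refine hex.trans ?_
    have : ((4:ℝ) ^ (2*d+1) - 1) * ε ≤ 1/2 := by
      have e4 : (4:ℝ) ^ (2*d+1) = 4 * 16^d := by rw [pow_succ, pow_mul]; norm_num; ring
      have : (4:ℝ) ^ (2*d+1) * ε = 1/2 := by rw [e4, hε]; field_simp; norm_num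
      linarith
    nlinarith
  have hall : ∀ m, m ≤ 4*d+1 → |q m - q 1| ≤ 1/2 * q 1 := by
    intro m hm
    rcases Nat.eq_zero_or_pos m with rfl | h
    · exact h0
    · exact (hclose m h hm).trans (by nlinarith)
  intro m m' hm hm'
  have h1 := abs_le.mp (hall m hm)
  have h2 := abs_le.mp (hall m' hm')
  change q m ≤ 3 * q m'
  linarith [h1.2, h2.1]
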